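/- Let φ : ℝ → ℝ be a C^∞ sigmoid (0 < φ < 1, φ′ > 0, φ(z) → 1 as z → +∞, φ(z) → 0 as z → −∞) satisfying the algebraic-decay assumption (A) with decay rate k, and fix α ∈ (0,1), α + β > 1. Then there exist real numbers η^L₀ < 0 < η^R₀ such that, writing μ₁* > 0 for the unique value with η^L₀ + μ₁*/α = η^R₀ + μ₁*/(α+β): (i) for every μ₁ ≥ 0 and every η₁ ∉ [η^L₀ + μ₁/α, η^R₀ + μ₁/(α+β)] there exist ε₀ > 0 and c > 0 such that for all ε ∈ (0, ε₀) the planar system ẋ = (α + β φ((x−1)/ε)) y − x, ẏ = η − (μ + α + β φ((x−1)/ε)) y with η = 1 + ε^{k/(k+1)} η₁ and μ = ε^{k/(k+1)} μ₁ has no nonconstant periodic solution whose image lies within Hausdorff distance c of the singular cycle Γ₀; (ii) for every μ₁ > μ₁* there exist ε₀ > 0, c > 0 and an open neighborhood I of 1 such that for all ε ∈ (0, ε₀) and all η ∈ I, the system with μ = ε^{k/(k+1)} μ₁ has no nonconstant periodic solution whose image lies within Hausdorff distance c of Γ₀. -/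

import Mathlib

open Filter Topology

/-- The substrate-depletion vector field
`(x, y) ↦ ((α + βφ((x−1)/ε))y − x, η − (μ + α + βφ((x−1)/ε))y)`. -/
noncomputable def sdVF (φ : ℝ → ℝ) (α β μ η ε : ℝ) (p : ℝ × ℝ) : ℝ × ℝ :=
  ((α + β * φ ((p.1 - 1) / ε)) * p.2 - p.1,
   η - (μ + α + β * φ ((p.1 - 1) / ε)) * p.2)

lemma fst_aux (f : ℝ → ℝ × ℝ) (p : ℝ × ℝ) (t : ℝ) (h : HasDerivAt f p t) :
    HasDerivAt (fun t => (f t).1) p.1 t := h.fst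

lemma snd_aux (f : ℝ → ℝ × ℝ) (p : ℝ × ℝ) (t : ℝ) (h : HasDerivAt f p t) :
    HasDerivAt (fun t => (f t).2) p.2 t := h.snd

lemma barrier_aux (f f' : ℝ → ℝ) (c t0 : ℝ) (hf : ∀ t, HasDerivAt f (f' t) t)
    (hb : ∀ t, t0 ≤ t → f t = c → f' t < 0) (h0 : f t0 ≤ c) : ∀ t, t0 ≤ t → f t ≤ c := by
  intro t ht
  refine image_le_of_deriv_right_lt_deriv_boundary (f := f) (f' := f') (a := t0) (b := t)
    (B := fun _ => c) (B' := fun _ => 0)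
    (fun s _ => (hf s).continuousAt.continuousWithinAt) (fun s _ => (hf s).hasDerivWithinAt)
    h0 (fun s => hasDerivAt_const s c) (fun s hs he => hb s hs.1 he) ⟨ht, le_refl t⟩

lemma periodic_aux (sol : ℝ → ℝ × ℝ) (T : ℝ) (hT : 0 < T) (hp : ∀ t, sol (t + T) = sol t)
    (t0 t1 : ℝ) : ∃ t, t0 ≤ t ∧ sol t = sol t1 := by
  obtain ⟨n, hn⟩ := exists_nat_gt ((t0 - t1) / T)
  refine ⟨t1 + n * T, ?_, ?_⟩
  · rw [div_lt_iff₀ hT] at hn; linarith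
  · exact (show Function.Periodic sol T from hp).nat_mul n t1

lemma trapL_aux (φ : ℝ → ℝ) (α β μ η ε X : ℝ) (hφ0 : ∀ z, 0 < φ z) (hα : 0 < α) (hβ : 0 < β)
    (hμ : 0 ≤ μ) (hη : 0 < η) (sol : ℝ → ℝ × ℝ)
    (hsol : ∀ t, HasDerivAt sol (sdVF φ α β μ η ε (sol t)) t)
    (hA : (α + β * φ ((X - 1) / ε)) * (η / (μ + α)) < X)
    (t0 : ℝ) (hx : (sol t0).1 ≤ X) (hy : (sol t0).2 ≤ η / (μ + α)) :
    ∀ t, t0 ≤ t → (sol t).1 ≤ X := by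
  have h1 : ∀ t, HasDerivAt (fun t => (sol t).1) (sdVF φ α β μ η ε (sol t)).1 t :=
    fun t => (hsol t).fst
  have h2 : ∀ t, HasDerivAt (fun t => (sol t).2) (sdVF φ α β μ η ε (sol t)).2 t :=
    fun t => (hsol t).snd
  have hYpos : 0 < η / (μ + α) := by positivity
  have hYe : η / (μ + α) * (μ + α) = η := by field_simp
  have hY := barrier_aux _ _ (η / (μ + α)) t0 h2 (by
    intro t _ he
    simp only [sdVF]
    rw [he]
    have := mul_pos (mul_pos hβ (hφ0 (((sol t).1 - 1) / ε))) hYpos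
    nlinarith) hy
  refine barrier_aux _ _ X t0 h1 ?_ hx
  intro t ht he
  simp only [sdVF]
  rw [he]
  have hp : 0 < α + β * φ ((X - 1) / ε) := by have := hφ0 ((X - 1) / ε); positivity
  have := mul_le_mul_of_nonneg_left (hY t ht) hp.le
  linarith

lemma trapR_aux (φ : ℝ → ℝ) (α β μ η ε X : ℝ) (hφ0 : ∀ z, 0 < φ z) (hφ1 : ∀ z, φ z < 1)
    (hα : 0 < α) (hβ : 0 < β)
    (hμ : 0 ≤ μ) (hη : 0 < η) (sol : ℝ → ℝ × ℝ)
    (hsol : ∀ t, HasDerivAt sol (sdVF φ α β μ η ε (sol t)) t)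
    (hA : X < (α + β * φ ((X - 1) / ε)) * (η / (μ + (α + β))))
    (t0 : ℝ) (hx : X ≤ (sol t0).1) (hy : η / (μ + (α + β)) ≤ (sol t0).2) :
    ∀ t, t0 ≤ t → X ≤ (sol t).1 := by
  have h1 : ∀ t, HasDerivAt (fun t => -(sol t).1) (-(sdVF φ α β μ η ε (sol t)).1) t :=
    fun t => (fst_aux _ _ _ (hsol t)).neg
  have h2 : ∀ t, HasDerivAt (fun t => -(sol t).2) (-(sdVF φ α β μ η ε (sol t)).2) t :=
    fun t => (snd_aux _ _ _ (hsol t)).neg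
  have hYpos : 0 < η / (μ + (α + β)) := by positivity
  have hYe : η / (μ + (α + β)) * (μ + (α + β)) = η := by field_simp
  have hY := barrier_aux _ _ (-(η / (μ + (α + β)))) t0 h2 (by
    intro t _ he
    have he' : (sol t).2 = η / (μ + (α + β)) := neg_injective he
    simp only [sdVF]
    rw [he']
    have := mul_pos (mul_pos hβ (sub_pos.2 (hφ1 (((sol t).1 - 1) / ε)))) hYpos
    nlinarith) (neg_le_neg hy)
  have := barrier_aux _ _ (-X) t0 h1 (by
    intro t ht he
    have he' : (sol t).1 = X := neg_injective he
    simp only [sdVF]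
    rw [he']
    have hp : 0 < α + β * φ ((X - 1) / ε) := by have := hφ0 ((X - 1) / ε); positivity
    have := mul_le_mul_of_nonneg_left (neg_le_neg_iff.1 (hY t ht)) hp.le
    linarith) (neg_le_neg hx)
  intro t ht
  exact neg_le_neg_iff.1 (this t ht)

lemma lin_aux (u v : ℝ → ℝ) (a : ℝ) (hu : ∀ t, HasDerivAt u (-a * u t) t)
    (hv : ∀ t, HasDerivAt v (u t - v t) t) (hu0 : u 0 < 0) (hv0 : v 0 = 0) :
    u 1 < 0 ∧ v 1 < 0 := by
  have hE : ∀ a t : ℝ, HasDerivAt (fun t => Real.exp (a * t)) (Real.exp (a * t) * a) t := by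
    intro a t
    have := ((hasDerivAt_id t).const_mul a).exp
    simpa using this
  have hneg : ∀ t, u t < 0 := by
    intro t
    have hd : ∀ t, HasDerivAt (fun t => u t * Real.exp (a * t)) 0 t := by
      intro t
      exact ((hu t).mul (hE a t)).congr_deriv (by ring)
    have := is_const_of_deriv_eq_zero (fun t => (hd t).differentiableAt)
      (fun t => (hd t).deriv) t 0
    simp only [mul_zero, Real.exp_zero, mul_one] at this
    by_contra hc
    have := mul_nonneg (not_lt.1 hc) (Real.exp_pos (a * t)).le
    linarith
  refine ⟨hneg 1, ?_⟩
  have hd : ∀ t, HasDerivAt (fun t => v t * Real.exp (1 * t)) (u t * Real.exp (1 * t)) t := by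
    intro t
    exact ((hv t).mul (hE 1 t)).congr_deriv (by ring)
  have hs : StrictAnti (fun t => v t * Real.exp (1 * t)) := by
    apply strictAnti_of_deriv_neg
    intro t
    rw [(hd t).deriv]
    exact mul_neg_of_neg_of_pos (hneg t) (Real.exp_pos _)
  have := hs (show (0 : ℝ) < 1 by norm_num)
  simp only [hv0, zero_mul] at this
  by_contra hc
  have := mul_nonneg (not_lt.1 hc) (Real.exp_pos (1 * 1)).le
  linarith

lemma bdd_curve_aux (γ : ℝ → ℝ × ℝ) (p : ℝ × ℝ) (hc : Continuous γ)
    (hl : Tendsto γ atTop (nhds p)) : Bornology.IsBounded (γ '' Set.Ici 0) := by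
  obtain ⟨N, hN⟩ := (hl.eventually (Metric.ball_mem_nhds p one_pos)).exists_forall_of_atTop
  have h1 : Bornology.IsBounded (γ '' Set.Icc 0 N) := (isCompact_Icc.image hc).isBounded
  refine (h1.union (Metric.isBounded_ball (x := p) (r := 1))).subset ?_
  rintro _ ⟨t, ht, rfl⟩
  rcases le_total t N with h | h
  · exact Or.inl ⟨t, ⟨ht, h⟩, rfl⟩
  · exact Or.inr (hN t h)

lemma visit_aux (sol : ℝ → ℝ × ℝ) (hc : Continuous sol) (T : ℝ) (hT : 0 < T)
    (hp : ∀ t, sol (t + T) = sol t) (G : Set (ℝ × ℝ)) (hG : Bornology.IsBounded G)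
    (c : ℝ) (hc0 : 0 < c)
    (h : Metric.hausdorffDist (Set.range sol) G ≤ c) (p : ℝ × ℝ) (hpG : p ∈ G) :
    ∃ t, |(sol t).1 - p.1| < 2 * c ∧ |(sol t).2 - p.2| < 2 * c := by
  have hb : Bornology.IsBounded (Set.range sol) := by
    have : Function.Periodic sol T := hp
    rw [← this.image_Icc hT 0]
    exact (isCompact_Icc.image hc).isBounded
  have hfin := Metric.hausdorffEDist_ne_top_of_nonempty_of_bounded (Set.range_nonempty sol) ⟨p, hpG⟩ hb hG
  obtain ⟨q, ⟨t, rfl⟩, hq⟩ := Metric.exists_dist_lt_of_hausdorffDist_lt' hpG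
    (show Metric.hausdorffDist (Set.range sol) G < 2 * c by linarith) hfin
  rw [Prod.dist_eq, max_lt_iff, Real.dist_eq, Real.dist_eq] at hq
  exact ⟨t, hq⟩

lemma rpow_aux (k : ℕ) (ε : ℝ) (hε : 0 < ε) :
    ∃ r : ℝ, 0 < r ∧ ε ^ ((k : ℝ) / ((k : ℝ) + 1)) = r ^ k ∧ ε = r ^ (k + 1) := by
  have hk : (k : ℝ) + 1 ≠ 0 := by positivity
  refine ⟨ε ^ (1 / ((k : ℝ) + 1)), Real.rpow_pos_of_pos hε _, ?_, ?_⟩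
  · rw [← Real.rpow_natCast, ← Real.rpow_mul hε.le]; congr 1; field_simp
  · rw [← Real.rpow_natCast, ← Real.rpow_mul hε.le]; push_cast
    rw [one_div_mul_cancel hk, Real.rpow_one]

lemma small_aux (K b : ℝ) (hb : 0 < b) : ∀ᶠ d : ℝ in 𝓝[>] 0, d * K < b := by
  have : Tendsto (fun d : ℝ => d * K) (𝓝[>] 0) (𝓝 0) := by
    have : Tendsto (fun d : ℝ => d * K) (𝓝 0) (𝓝 (0 * K)) := (continuous_mul_const K).tendsto 0
    rw [zero_mul] at this
    exact this.mono_left nhdsWithin_le_nhds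
  exact this.eventually (gt_mem_nhds hb)

lemma delta_aux (k : ℕ) (hk : 1 ≤ k) (d : ℝ) (hd : 0 < d) : ∃ ε₀ : ℝ, 0 < ε₀ ∧
    ∀ ε : ℝ, 0 < ε → ε < ε₀ → ε ^ ((k : ℝ) / ((k : ℝ) + 1)) < d := by
  have hk' : (0 : ℝ) < k := by exact_mod_cast hk
  have hp : 0 < (k : ℝ) / ((k : ℝ) + 1) := by positivity
  refine ⟨d ^ ((k : ℝ) / ((k : ℝ) + 1))⁻¹, Real.rpow_pos_of_pos hd _, fun ε h0 h1 => ?_⟩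
  have := Real.rpow_lt_rpow h0.le h1 hp
  rwa [← Real.rpow_mul hd.le, inv_mul_cancel₀ hp.ne', Real.rpow_one] at this

lemma phi_aux (φ φL φR : ℝ → ℝ) (k : ℕ) (hk : 1 ≤ k) (M : ℝ)
    (hML : ∀ u, 0 ≤ u → u ≤ 1 → φL u ≤ M) (hMR : ∀ u, 0 ≤ u → u ≤ 1 → φR u ≤ M)
    (hAL : ∀ z : ℝ, z < 0 → φ z = ((-z) ^ k)⁻¹ * φL (-z)⁻¹)
    (hAR : ∀ z : ℝ, 0 < z → φ z = 1 - (z ^ k)⁻¹ * φR z⁻¹)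
    (ε δ : ℝ) (hε : 0 < ε) (hδ : δ = ε ^ ((k : ℝ) / ((k : ℝ) + 1))) (hδ1 : δ < 1) :
    0 < δ ∧ φ ((1 - δ - 1) / ε) ≤ δ * M ∧ 1 - δ * M ≤ φ ((1 + δ - 1) / ε) := by
  obtain ⟨r, hr, h1, h2⟩ := rpow_aux k ε hε
  rw [h1] at hδ
  have hr1 : r ≤ 1 := by
    by_contra hc
    have := one_le_pow₀ (n := k) (not_le.1 hc).le
    linarith
  have hδ0 : 0 < δ := by rw [hδ]; positivity
  have e1 : (1 - δ - 1) / ε = -r⁻¹ := by rw [hδ, h2]; field_simp; ring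
  have e2 : (1 + δ - 1) / ε = r⁻¹ := by rw [hδ, h2]; field_simp; ring
  have hri : 0 < r⁻¹ := inv_pos.2 hr
  rw [e1, e2, hAL _ (by linarith), hAR _ hri]
  simp only [neg_neg, inv_pow, inv_inv]
  rw [← hδ]
  refine ⟨hδ0, mul_le_mul_of_nonneg_left (hML r hr.le hr1) hδ0.le, ?_⟩
  have := mul_le_mul_of_nonneg_left (hMR r hr.le hr1) hδ0.le
  linarith

lemma coreL_aux (φ : ℝ → ℝ) (α β M δ ε μ₁ η₁ η g : ℝ) (hφ0 : ∀ z, 0 < φ z)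
    (hα : 0 < α) (hβ : 0 < β) (hM : 0 < M) (hδ0 : 0 < δ)
    (hφ : φ ((1 - δ - 1) / ε) ≤ δ * M) (hμ : 0 ≤ μ₁)
    (hη₁ : η₁ < -(2 + β * M / α) + μ₁ / α) (hη : η ≤ 1 + δ * η₁)
    (g0 : 0 < g) (pL : ℝ × ℝ) (hp1 : pL.1 + 4 * g ≤ 1) (hp2 : pL.2 + 4 * g ≤ 1 / α)
    (d : ℝ) (hd1 : d < 1 / 2) (hd2 : d * (β * M * |η₁| + μ₁) < α) (hd3 : d < g)
    (hd4 : d * (μ₁ / α + 1) < α * g) (hδd : δ < d) (hηd : |η - 1| < d)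
    (sol : ℝ → ℝ × ℝ) (hsol : ∀ t, HasDerivAt sol (sdVF φ α β (δ * μ₁) η ε (sol t)) t)
    (T : ℝ) (hT : 0 < T) (hp : ∀ t, sol (t + T) = sol t)
    (t0 : ℝ) (h0 : |(sol t0).1 - pL.1| < 2 * g) (h0' : |(sol t0).2 - pL.2| < 2 * g)
    (t1 : ℝ) (h1 : 1 < (sol t1).1) : False := by
  rw [abs_lt] at h0 h0' hηd
  have hη0 : 0 < η := by linarith
  have hden : 0 < δ * μ₁ + α := by positivity
  have key : (α + β * (δ * M)) * η < (1 - δ) * (δ * μ₁ + α) := by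
    have e1 : (α + β * (δ * M)) * η ≤ (α + β * (δ * M)) * (1 + δ * η₁) :=
      mul_le_mul_of_nonneg_left hη (by positivity)
    have e2 : α * η₁ < -(2 * α + β * M) + μ₁ := by
      have := mul_lt_mul_of_pos_left hη₁ hα
      have e : α * (-(2 + β * M / α) + μ₁ / α) = -(2 * α + β * M) + μ₁ := by field_simp
      linarith
    have e3 : δ * (β * M * |η₁| + μ₁) < α := by
      refine lt_of_le_of_lt ?_ hd2
      gcongr
    have e4 : β * M * η₁ ≤ β * M * |η₁| :=
      mul_le_mul_of_nonneg_left (le_abs_self _) (by positivity)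
    have e5 : δ * (β * M * η₁ + μ₁) < α :=
      lt_of_le_of_lt (mul_le_mul_of_nonneg_left (by linarith) hδ0.le) e3
    have e6 : 0 < δ * (-(2 * α + β * M) + μ₁ - α * η₁ + (α - δ * (β * M * η₁ + μ₁))) :=
      mul_pos hδ0 (by linarith)
    nlinarith
  have hA : (α + β * φ ((1 - δ - 1) / ε)) * (η / (δ * μ₁ + α)) < 1 - δ := by
    rw [mul_div_assoc', div_lt_iff₀ hden]
    refine lt_of_le_of_lt ?_ key
    gcongr
  have hy : (sol t0).2 ≤ η / (δ * μ₁ + α) := by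
    rw [le_div_iff₀ hden]
    have e1 : (sol t0).2 ≤ 1 / α - g := by linarith
    have e2 := mul_le_mul_of_nonneg_right e1 hden.le
    have e3 : (1 / α - g) * (δ * μ₁ + α) = δ * (μ₁ / α) + 1 - g * δ * μ₁ - α * g := by
      field_simp; ring
    have e4 : δ * (μ₁ / α) ≤ d * (μ₁ / α) := mul_le_mul_of_nonneg_right hδd.le (by positivity)
    have e5 : 0 ≤ g * δ * μ₁ := by positivity
    linarith
  have htr := trapL_aux φ α β (δ * μ₁) η ε (1 - δ) hφ0 hα hβ (by positivity) hη0 sol hsol hA t0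
    (by linarith) hy
  obtain ⟨t, ht, he⟩ := periodic_aux sol T hT hp t0 t1
  have := htr t ht
  rw [he] at this
  linarith

lemma coreR_aux (φ : ℝ → ℝ) (α β M δ ε μ₁ η₁ η g : ℝ) (hφ0 : ∀ z, 0 < φ z)
    (hφ1 : ∀ z, φ z < 1)
    (hα : 0 < α) (hβ : 0 < β) (hM : 0 < M) (hδ0 : 0 < δ)
    (hφ : 1 - δ * M ≤ φ ((1 + δ - 1) / ε)) (hμ : 0 ≤ μ₁)
    (hη₁ : (2 + β * M / (α + β)) + μ₁ / (α + β) < η₁) (hη : 1 + δ * η₁ ≤ η)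
    (g0 : 0 < g) (pR : ℝ × ℝ) (hp1 : 1 + 4 * g ≤ pR.1) (hp2 : 1 / (α + β) + 4 * g ≤ pR.2)
    (d : ℝ) (hd1 : d < 1 / 2) (hd2 : d * (β * M * |η₁| + μ₁) < α) (hd3 : d < g)
    (hd4 : d * (μ₁ / α + 1) < α * g) (hd5 : d * M < 1) (hδd : δ < d) (hηd : |η - 1| < d)
    (sol : ℝ → ℝ × ℝ) (hsol : ∀ t, HasDerivAt sol (sdVF φ α β (δ * μ₁) η ε (sol t)) t)
    (T : ℝ) (hT : 0 < T) (hp : ∀ t, sol (t + T) = sol t)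
    (t0 : ℝ) (h0 : |(sol t0).1 - pR.1| < 2 * g) (h0' : |(sol t0).2 - pR.2| < 2 * g)
    (t1 : ℝ) (h1 : (sol t1).1 < 1) : False := by
  rw [abs_lt] at h0 h0' hηd
  have hη0 : 0 < η := by linarith
  have hS : 0 < α + β := by positivity
  have hden : 0 < δ * μ₁ + (α + β) := by positivity
  have hδM : δ * M < 1 := lt_of_le_of_lt (mul_le_mul_of_nonneg_right hδd.le hM.le) hd5
  have hd0 : 0 < d := by linarith
  have key : (1 + δ) * (δ * μ₁ + (α + β)) < (α + β * (1 - δ * M)) * η := by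
    have hc : 0 ≤ α + β * (1 - δ * M) := by
      have := mul_nonneg hβ.le (sub_nonneg.2 hδM.le)
      linarith
    have e1 : (α + β * (1 - δ * M)) * (1 + δ * η₁) ≤ (α + β * (1 - δ * M)) * η :=
      mul_le_mul_of_nonneg_left hη hc
    have e2 : 2 * (α + β) + β * M + μ₁ < (α + β) * η₁ := by
      have := mul_lt_mul_of_pos_left hη₁ hS
      have e : (α + β) * ((2 + β * M / (α + β)) + μ₁ / (α + β)) = 2 * (α + β) + β * M + μ₁ := by
        field_simp
      linarith
    have e3 : δ * (β * M * |η₁| + μ₁) < α := by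
      refine lt_of_le_of_lt ?_ hd2
      gcongr
    have e4 : β * M * η₁ ≤ β * M * |η₁| :=
      mul_le_mul_of_nonneg_left (le_abs_self _) (by positivity)
    have e5 : δ * (β * M * η₁ + μ₁) < α :=
      lt_of_le_of_lt (mul_le_mul_of_nonneg_left (by linarith) hδ0.le) e3
    have e6 : 0 < δ * ((α + β) * η₁ - (2 * (α + β) + β * M + μ₁)
        + ((α + β) - δ * (β * M * η₁ + μ₁))) :=
      mul_pos hδ0 (by linarith)
    nlinarith
  have hA : 1 + δ < (α + β * φ ((1 + δ - 1) / ε)) * (η / (δ * μ₁ + (α + β))) := by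
    rw [mul_div_assoc', lt_div_iff₀ hden]
    refine lt_of_lt_of_le key ?_
    gcongr
  have hy : η / (δ * μ₁ + (α + β)) ≤ (sol t0).2 := by
    rw [div_le_iff₀ hden]
    have e1 : 1 / (α + β) + g ≤ (sol t0).2 := by linarith
    have e2 := mul_le_mul_of_nonneg_right e1 hden.le
    have e3 : (1 / (α + β) + g) * (δ * μ₁ + (α + β))
        = δ * (μ₁ / (α + β)) + 1 + g * δ * μ₁ + (α + β) * g := by
      field_simp; ring
    have e4 : 0 ≤ δ * (μ₁ / (α + β)) := by positivity
    have e5 : 0 ≤ g * δ * μ₁ := by positivity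
    have e6 : 0 ≤ d * (μ₁ / α) := by positivity
    have e7 : 0 < β * g := by positivity
    linarith
  have htr := trapR_aux φ α β (δ * μ₁) η ε (1 + δ) hφ0 hφ1 hα hβ (by positivity) hη0 sol hsol hA t0
    (by linarith) hy
  obtain ⟨t, ht, he⟩ := periodic_aux sol T hT hp t0 t1
  have := htr t ht
  rw [he] at this
  linarith

/-- Nonexistence of relaxation oscillations (Theorem 1(b) nonexistence part and 1(c)):
there exist heteroclinic values `η^L₀ < 0 < η^R₀` such that (i) for `μ₁ ≥ 0` and
`η₁ ∉ [η^L₀ + μ₁/α, η^R₀ + μ₁/(α+β)]`, for all small `ε > 0` the system with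
`η = 1 + ε^{k/(k+1)}η₁`, `μ = ε^{k/(k+1)}μ₁` has no nonconstant periodic solution near
the singular cycle `Γ₀`; and (ii) for `μ₁` above the crossing value `μ₁*` (the unique
`μ* > 0` with `η^L₀ + μ*/α = η^R₀ + μ*/(α+β)`), there is a neighborhood `I` of `η = 1`
such that for all small `ε > 0` and all `η ∈ I` the system with `μ = ε^{k/(k+1)}μ₁` has
no nonconstant periodic solution near `Γ₀`. -/
theorem nonexistence_of_relaxation_oscillations
    (φ φL φR : ℝ → ℝ) (k : ℕ) (α β : ℝ)
    (hφ : ContDiff ℝ (⊤ : ℕ∞) φ)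
    (hφ0 : ∀ z, 0 < φ z) (hφ1 : ∀ z, φ z < 1)
    (hφ' : ∀ z, 0 < deriv φ z)
    (hφtop : Tendsto φ atTop (nhds 1)) (hφbot : Tendsto φ atBot (nhds 0))
    (hk : 1 ≤ k)
    (hφL : ContDiff ℝ (⊤ : ℕ∞) φL) (hφR : ContDiff ℝ (⊤ : ℕ∞) φR)
    (hφLnn : ∀ u : ℝ, 0 ≤ u → 0 ≤ φL u) (hφRnn : ∀ u : ℝ, 0 ≤ u → 0 ≤ φR u)
    (hφL0 : 0 < φL 0) (hφR0 : 0 < φR 0)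
    (hAL : ∀ z : ℝ, z < 0 → φ z = ((-z) ^ k)⁻¹ * φL (-z)⁻¹)
    (hAR : ∀ z : ℝ, 0 < z → φ z = 1 - (z ^ k)⁻¹ * φR z⁻¹)
    (hα : 0 < α) (hα1 : α < 1) (hαβ : 1 < α + β)
    (γR γL : ℝ → ℝ × ℝ)
    (hγR0 : γR 0 = (1, 1 / α))
    (hγR : ∀ t, HasDerivAt γR
      ((α + β) * (γR t).2 - (γR t).1, 1 - (α + β) * (γR t).2) t)
    (hγRlim : Tendsto γR atTop (nhds (1, 1 / (α + β))))
    (hγL0 : γL 0 = (1, 1 / (α + β)))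
    (hγL : ∀ t, HasDerivAt γL
      (α * (γL t).2 - (γL t).1, 1 - α * (γL t).2) t)
    (hγLlim : Tendsto γL atTop (nhds (1, 1 / α))) :
    ∃ ηL0 : ℝ, ηL0 < 0 ∧ ∃ ηR0 : ℝ, 0 < ηR0 ∧
      ((∀ μ₁ : ℝ, 0 ≤ μ₁ → ∀ η₁ : ℝ,
        η₁ ∉ Set.Icc (ηL0 + μ₁ / α) (ηR0 + μ₁ / (α + β)) →
        ∃ ε₀ > 0, ∃ c > 0, ∀ ε : ℝ, 0 < ε → ε < ε₀ →
          ¬ ∃ sol : ℝ → ℝ × ℝ,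
            (∀ t, HasDerivAt sol
              (sdVF φ α β (ε ^ ((k : ℝ) / ((k : ℝ) + 1)) * μ₁)
                (1 + ε ^ ((k : ℝ) / ((k : ℝ) + 1)) * η₁) ε (sol t)) t) ∧
            (∃ T > 0, ∀ t, sol (t + T) = sol t) ∧
            (∃ t s : ℝ, sol t ≠ sol s) ∧
            Metric.hausdorffDist (Set.range sol)
              (γR '' Set.Ici 0 ∪ γL '' Set.Ici 0 ∪ {(1, 1 / α), (1, 1 / (α + β))}) ≤ c) ∧
      (∀ μs : ℝ, 0 < μs → ηL0 + μs / α = ηR0 + μs / (α + β) →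
        ∀ μ₁ : ℝ, μs < μ₁ →
        ∃ ε₀ > 0, ∃ c > 0, ∃ I : Set ℝ, IsOpen I ∧ (1 : ℝ) ∈ I ∧
          ∀ ε : ℝ, 0 < ε → ε < ε₀ → ∀ η ∈ I,
          ¬ ∃ sol : ℝ → ℝ × ℝ,
            (∀ t, HasDerivAt sol
              (sdVF φ α β (ε ^ ((k : ℝ) / ((k : ℝ) + 1)) * μ₁) η ε (sol t)) t) ∧
            (∃ T > 0, ∀ t, sol (t + T) = sol t) ∧
            (∃ t s : ℝ, sol t ≠ sol s) ∧
            Metric.hausdorffDist (Set.range sol)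
              (γR '' Set.Ici 0 ∪ γL '' Set.Ici 0 ∪ {(1, 1 / α), (1, 1 / (α + β))}) ≤ c)) := by
  have hβ : 0 < β := by linarith
  have hS : 0 < α + β := by linarith
  obtain ⟨M, hM, hML, hMR⟩ : ∃ M : ℝ, 0 < M ∧ (∀ u, 0 ≤ u → u ≤ 1 → φL u ≤ M) ∧
      (∀ u, 0 ≤ u → u ≤ 1 → φR u ≤ M) := by
    obtain ⟨A, hA⟩ := (isCompact_Icc (a := (0 : ℝ)) (b := 1)).bddAbove_image
      hφL.continuous.continuousOn
    obtain ⟨B, hB⟩ := (isCompact_Icc (a := (0 : ℝ)) (b := 1)).bddAbove_image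
      hφR.continuous.continuousOn
    have hA' : ∀ u, 0 ≤ u → u ≤ 1 → φL u ≤ A := fun u h0 h1 => hA ⟨u, ⟨h0, h1⟩, rfl⟩
    have hB' : ∀ u, 0 ≤ u → u ≤ 1 → φR u ≤ B := fun u h0 h1 => hB ⟨u, ⟨h0, h1⟩, rfl⟩
    refine ⟨max A B, lt_of_lt_of_le hφL0 ((hA' 0 le_rfl zero_le_one).trans (le_max_left _ _)),
      fun u h0 h1 => (hA' u h0 h1).trans (le_max_left _ _),
      fun u h0 h1 => (hB' u h0 h1).trans (le_max_right _ _)⟩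
  set G : Set (ℝ × ℝ) :=
    γR '' Set.Ici 0 ∪ γL '' Set.Ici 0 ∪ {(1, 1 / α), (1, 1 / (α + β))} with hGdef
  have hG : Bornology.IsBounded G := by
    refine ((bdd_curve_aux γR _ ?_ hγRlim).union (bdd_curve_aux γL _ ?_ hγLlim)).union ?_
    · exact continuous_iff_continuousAt.2 fun t => (hγR t).continuousAt
    · exact continuous_iff_continuousAt.2 fun t => (hγL t).continuousAt
    · exact (Set.toFinite _).isBounded
  have hinv : 1 / (α + β) < 1 / α := one_div_lt_one_div_of_lt hα (by linarith)
  have hpL := lin_aux (fun t => α * (γL t).2 - 1) (fun t => (γL t).1 - 1) α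
    (fun t => by
      exact (((snd_aux _ _ _ (hγL t)).const_mul α).sub_const 1).congr_deriv (by ring))
    (fun t => by
      exact ((fst_aux _ _ _ (hγL t)).sub_const 1).congr_deriv (by ring))
    (by
      simp only [hγL0]
      have := mul_lt_mul_of_pos_left hinv hα
      rw [mul_one_div_cancel hα.ne'] at this
      linarith)
    (by simp [hγL0])
  have hpR := lin_aux (fun t => 1 - (α + β) * (γR t).2) (fun t => 1 - (γR t).1) (α + β)
    (fun t => by
      exact (((snd_aux _ _ _ (hγR t)).const_mul (α + β)).const_sub 1).congr_deriv (by ring))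
    (fun t => by
      exact ((fst_aux _ _ _ (hγR t)).const_sub 1).congr_deriv (by ring))
    (by
      simp only [hγR0]
      have := mul_lt_mul_of_pos_left hinv hS
      rw [mul_one_div_cancel hS.ne'] at this
      linarith)
    (by simp [hγR0])
  have hpL2 : (γL 1).2 < 1 / α := by
    rw [lt_div_iff₀ hα]; linarith
  have hpR2 : 1 / (α + β) < (γR 1).2 := by
    rw [div_lt_iff₀ hS]; linarith
  obtain ⟨g, ⟨⟨⟨g1, g2⟩, g3⟩, g4⟩, g0⟩ := ((((small_aux 4 (1 - (γL 1).1) (by linarith)).and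
    (small_aux 4 (1 / α - (γL 1).2) (by linarith))).and
    (small_aux 4 ((γR 1).1 - 1) (by linarith))).and
    (small_aux 4 ((γR 1).2 - 1 / (α + β)) (by linarith))).and
    (self_mem_nhdsWithin : Set.Ioi (0 : ℝ) ∈ 𝓝[>] 0) |>.exists
  have g0 : 0 < g := g0
  have core : ∀ μ₁ : ℝ, 0 ≤ μ₁ → ∀ η₁ : ℝ, ∃ d : ℝ, 0 < d ∧ ∀ ε : ℝ, 0 < ε →
      ε ^ ((k : ℝ) / ((k : ℝ) + 1)) < d → ∀ η : ℝ, |η - 1| < d →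
      ((η₁ < -(2 + β * M / α) + μ₁ / α ∧ η ≤ 1 + ε ^ ((k : ℝ) / ((k : ℝ) + 1)) * η₁) ∨
       ((2 + β * M / (α + β)) + μ₁ / (α + β) < η₁ ∧
          1 + ε ^ ((k : ℝ) / ((k : ℝ) + 1)) * η₁ ≤ η)) →
      ¬ ∃ sol : ℝ → ℝ × ℝ,
            (∀ t, HasDerivAt sol
              (sdVF φ α β (ε ^ ((k : ℝ) / ((k : ℝ) + 1)) * μ₁) η ε (sol t)) t) ∧
            (∃ T > 0, ∀ t, sol (t + T) = sol t) ∧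
            (∃ t s : ℝ, sol t ≠ sol s) ∧
            Metric.hausdorffDist (Set.range sol) G ≤ g := by
    intro μ₁ hμ η₁
    obtain ⟨d, ⟨⟨⟨⟨d1, d2⟩, d3⟩, d4⟩, d5⟩, d0⟩ := (((((small_aux 1 (1 / 2) (by norm_num)).and
      (small_aux (β * M * |η₁| + μ₁) α hα)).and
      (small_aux 1 g g0)).and
      (small_aux (μ₁ / α + 1) (α * g) (by positivity))).and
      (small_aux M 1 one_pos)).and
      (self_mem_nhdsWithin : Set.Ioi (0 : ℝ) ∈ 𝓝[>] 0) |>.exists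
    rw [mul_one] at d1 d3
    refine ⟨d, d0, ?_⟩
    rintro ε hε hδd η hηd hcase ⟨sol, hsol, ⟨T, hT, hp⟩, -, hH⟩
    obtain ⟨hδ0, hl, hr⟩ := phi_aux φ φL φR k hk M hML hMR hAL hAR ε _ hε rfl (by linarith)
    have hc : Continuous sol := continuous_iff_continuousAt.2 fun t => (hsol t).continuousAt
    obtain ⟨tL, hL1, hL2⟩ := visit_aux sol hc T hT hp G hG g g0 hH (γL 1)
      (Or.inl (Or.inr ⟨1, by simp, rfl⟩))
    obtain ⟨tR, hR1, hR2⟩ := visit_aux sol hc T hT hp G hG g g0 hH (γR 1)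
      (Or.inl (Or.inl ⟨1, by simp, rfl⟩))
    rcases hcase with ⟨h1, h2⟩ | ⟨h1, h2⟩
    · refine coreL_aux φ α β M _ ε μ₁ η₁ η g hφ0 hα hβ hM hδ0 hl hμ h1 h2 g0 (γL 1)
        (by linarith) (by linarith) d d1 d2 d3 d4 hδd hηd sol hsol T hT hp tL hL1 hL2 tR ?_
      rw [abs_lt] at hR1
      linarith
    · refine coreR_aux φ α β M _ ε μ₁ η₁ η g hφ0 hφ1 hα hβ hM hδ0 hr hμ h1 h2 g0 (γR 1)
        (by linarith) (by linarith) d d1 d2 d3 d4 d5 hδd hηd sol hsol T hT hp tR hR1 hR2 tL ?_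
      rw [abs_lt] at hL1
      linarith
  refine ⟨-(2 + β * M / α), neg_lt_zero.2 (by positivity), 2 + β * M / (α + β), by positivity,
    ?_, ?_⟩
  · intro μ₁ hμ η₁ hη₁
    obtain ⟨d, d0, hd⟩ := core μ₁ hμ η₁
    obtain ⟨d', ⟨e1, e2⟩, e0⟩ := ((small_aux 1 d d0).and (small_aux |η₁| d d0)).and
      (self_mem_nhdsWithin : Set.Ioi (0 : ℝ) ∈ 𝓝[>] 0) |>.exists
    have e0 : 0 < d' := e0
    obtain ⟨ε₀, h0, hε₀⟩ := delta_aux k hk d' e0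
    refine ⟨ε₀, h0, g, g0, fun ε hε hlt => ?_⟩
    have hδ := hε₀ ε hε hlt
    have hδ0 : 0 < ε ^ ((k : ℝ) / ((k : ℝ) + 1)) := Real.rpow_pos_of_pos hε _
    refine hd ε hε (by linarith) _ ?_ ?_
    · rw [add_sub_cancel_left, abs_mul, abs_of_pos hδ0]
      exact lt_of_le_of_lt (mul_le_mul_of_nonneg_right hδ.le (abs_nonneg _)) e2
    · rw [Set.mem_Icc, not_and_or, not_le, not_le] at hη₁
      exact hη₁.imp (fun h => ⟨h, le_rfl⟩) (fun h => ⟨h, le_rfl⟩)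
  · intro μs hμs heq μ₁ hμ₁
    have hgap : 2 + β * M / (α + β) + μ₁ / (α + β) < -(2 + β * M / α) + μ₁ / α := by
      have := mul_lt_mul_of_pos_left hinv (sub_pos.2 hμ₁)
      have e1 : (μ₁ - μs) * (1 / (α + β)) = μ₁ / (α + β) - μs / (α + β) := by ring
      have e2 : (μ₁ - μs) * (1 / α) = μ₁ / α - μs / α := by ring
      linarith
    obtain ⟨m, hm1, hm2⟩ := exists_between hgap
    obtain ⟨d, d0, hd⟩ := core μ₁ (by linarith) m
    obtain ⟨ε₀, h0, hε₀⟩ := delta_aux k hk d d0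
    refine ⟨ε₀, h0, g, g0, Metric.ball 1 d, Metric.isOpen_ball, Metric.mem_ball_self d0,
      fun ε hε hlt η hη => ?_⟩
    refine hd ε hε (hε₀ ε hε hlt) η (by simpa [Real.dist_eq] using hη) ?_
    rcases le_total η (1 + ε ^ ((k : ℝ) / ((k : ℝ) + 1)) * m) with h | h
    · exact Or.inl ⟨hm2, h⟩
    · exact Or.inr ⟨hm1, h⟩
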